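/- arXiv:1811.01847 — 3 statements merged into one kernel-verified Lean document; each statement's English description precedes it below -/
import Mathlib

section
/- Let B₁ ⊂ ℝ^d be the open unit ball and let {f_j} ⊂ L¹(B₁) be a sequence such that: (i) ∫_{B₁} f_j φ dx → 0 for every φ ∈ C_c^∞(B₁); (ii) the negative parts f_j⁻ := max{−f_j, 0} converge to zero in Lebesgue measure, i.e. for every δ > 0 the Lebesgue measure of {x ∈ B₁ : f_j⁻(x) > δ} tends to 0 as j → ∞; (iii) the family {f_j⁻} is equiintegrable, i.e. for every ε > 0 there is δ > 0 such that ∫_A f_j⁻ dx ≤ ε for all j and all measurable A ⊆ B₁ with |A| < δ. Then f_j → 0 in L¹_loc(B₁): ∫_K |f_j| dx → 0 for every compact K ⊂ B₁. (Lemma 2.2.) -/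
open MeasureTheory Metric Filter Topology

noncomputable section

/-!
Choose a smooth cutoff `φ` with `0 ≤ φ ≤ 1`, equal to `1` on `K` and compactly supported in the
domain. Since `|f| = f + 2 f⁻`, we have `∫_K |f_j| ≤ ∫ f_j φ + 2 ∫_{supp φ} f_j⁻`. The first term
tends to zero by weak convergence, and the second by Vitali's theorem on the finite measure space
`supp φ`.
-/

section MeasureSpace

variable {α : Type*} [MeasurableSpace α] {μ : Measure α}

theorem tendsto_integral_of_unifIntegrable_of_tendstoInMeasure
    {E : Type*} [NormedAddCommGroup E] [NormedSpace ℝ E] [IsFiniteMeasure μ]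
    {f : ℕ → α → E} {g : α → E} (hf : ∀ n, Integrable (f n) μ) (hg : Integrable g μ)
    (hui : UnifIntegrable f 1 μ) (hfg : TendstoInMeasure μ f atTop g) :
    Tendsto (fun n => ∫ x, f n x ∂μ) atTop (𝓝 (∫ x, g x ∂μ)) :=
  tendsto_integral_of_L1' g hg.aestronglyMeasurable (.of_forall hf) <|
    tendsto_Lp_finite_of_tendstoInMeasure le_rfl ENNReal.one_ne_top
      (fun n => (hf n).aestronglyMeasurable) (memLp_one_iff_integrable.2 hg) hui hfg

theorem tendstoInMeasure_restrict_of_tendsto_measure_lt_norm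
    {ι E : Type*} [SeminormedAddCommGroup E] {l : Filter ι} {f : ι → α → E} {s t : Set α}
    (ht : MeasurableSet t) (hts : t ⊆ s)
    (h : ∀ δ : ℝ, 0 < δ → Tendsto (fun i => μ {x ∈ s | δ < ‖f i x‖}) l (𝓝 0)) :
    TendstoInMeasure (μ.restrict t) f l 0 := by
  refine tendstoInMeasure_iff_norm.2 fun ε hε => ?_
  refine tendsto_of_tendsto_of_tendsto_of_le_of_le tendsto_const_nhds (h (ε / 2) (half_pos hε))
    (fun _ => zero_le) fun i => ?_
  rw [Measure.restrict_apply' ht]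
  refine measure_mono fun x ⟨(hx : ε ≤ ‖f i x - 0‖), hxt⟩ => ⟨hts hxt, ?_⟩
  rw [sub_zero] at hx
  exact (half_lt_self hε).trans_le hx

theorem unifIntegrable_one_restrict_of_setIntegral_norm_le
    {ι E : Type*} [NormedAddCommGroup E] {f : ι → α → E} {s : Set α} (hs : MeasurableSet s)
    (hf : ∀ i, IntegrableOn (f i) s μ)
    (h : ∀ ε : ℝ, 0 < ε → ∃ δ : ℝ, 0 < δ ∧ ∀ i, ∀ A ⊆ s, MeasurableSet A →
      μ A < ENNReal.ofReal δ → ∫ x in A, ‖f i x‖ ∂μ ≤ ε) :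
    UnifIntegrable f 1 (μ.restrict s) := by
  intro ε hε
  obtain ⟨δ, hδ, hA⟩ := h ε hε
  refine ⟨δ / 2, half_pos hδ, fun i A hAm hAδ => ?_⟩
  rw [Measure.restrict_apply hAm] at hAδ
  have hlt : μ (A ∩ s) < ENNReal.ofReal δ :=
    hAδ.trans_lt ((ENNReal.ofReal_lt_ofReal_iff hδ).2 (half_lt_self hδ))
  rw [eLpNorm_indicator_eq_eLpNorm_restrict hAm, Measure.restrict_restrict hAm,
    eLpNorm_one_eq_lintegral_enorm,
    ← ofReal_integral_norm_eq_lintegral_enorm ((hf i).mono_set Set.inter_subset_right)]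
  exact ENNReal.ofReal_le_ofReal (hA i _ Set.inter_subset_right (hAm.inter hs) hlt)

theorem abs_mul_le_mul_add_two_mul_negPart {R : Type*} [Ring R] [LinearOrder R] [IsOrderedRing R]
    (a : R) {t : R} (ht : t ≤ 1) :
    |a| * t ≤ a * t + 2 * a⁻ := by
  have habs : |a| = a + 2 * a⁻ := by
    rw [two_mul, ← two_nsmul, ← abs_sub_eq_two_nsmul_negPart, add_sub_cancel]
  calc |a| * t = a * t + 2 * (a⁻ * t) := by rw [habs, add_mul, mul_assoc]
    _ ≤ a * t + 2 * a⁻ := by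
        grw [mul_le_of_le_one_right (negPart_nonneg a) ht]
        exact zero_le_two

theorem setIntegral_abs_le_integral_mul_add_integral_negPart {f φ : α → ℝ} {s : Set α}
    (hs : MeasurableSet s) (hf : Integrable f μ) (hφm : AEStronglyMeasurable φ μ)
    (hφ : ∀ x, φ x ∈ Set.Icc 0 1) (hφs : Set.EqOn φ 1 s) :
    ∫ x in s, |f x| ∂μ ≤ ∫ x, f x * φ x ∂μ + 2 * ∫ x, (f x)⁻ ∂μ := by
  have hφ_norm : ∀ᵐ x ∂μ, ‖φ x‖ ≤ 1 := .of_forall fun x => by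
    rw [Real.norm_of_nonneg (hφ x).1]; exact (hφ x).2
  have hfφ : Integrable (fun x => f x * φ x) μ := hf.mul_bdd hφm hφ_norm
  have habs : Integrable (fun x => |f x| * φ x) μ := hf.abs.mul_bdd hφm hφ_norm
  have hneg : Integrable (fun x => 2 * (f x)⁻) μ := hf.neg_part.const_mul 2
  calc ∫ x in s, |f x| ∂μ = ∫ x in s, |f x| * φ x ∂μ :=
        setIntegral_congr_fun hs fun x hx => by simp [hφs hx]
    _ ≤ ∫ x, |f x| * φ x ∂μ :=
        setIntegral_le_integral habs (.of_forall fun x => mul_nonneg (abs_nonneg _) (hφ x).1)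
    _ ≤ ∫ x, (f x * φ x + 2 * (f x)⁻) ∂μ :=
        integral_mono habs (hfφ.add hneg) fun x =>
          abs_mul_le_mul_add_two_mul_negPart (f x) (hφ x).2
    _ = ∫ x, f x * φ x ∂μ + 2 * ∫ x, (f x)⁻ ∂μ := by
        rw [integral_add hfφ hneg, integral_const_mul]

end MeasureSpace

section FiniteDimensional

variable {E : Type*} [NormedAddCommGroup E] [NormedSpace ℝ E] [FiniteDimensional ℝ E]

theorem exists_contDiff_hasCompactSupport_eqOn_one {K U : Set E} (hK : IsCompact K)
    (hU : IsOpen U) (hKU : K ⊆ U) :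
    ∃ φ : E → ℝ, ContDiff ℝ (⊤ : ℕ∞) φ ∧ HasCompactSupport φ ∧ tsupport φ ⊆ U ∧
      (∀ x, φ x ∈ Set.Icc 0 1) ∧ Set.EqOn φ 1 K := by
  obtain ⟨L, hL, hKL, hLU⟩ := exists_compact_between hK hU hKU
  obtain ⟨φ, hφK, hφL, hφ⟩ := exists_contMDiffMap_one_nhds_of_subset_interior (n := (⊤ : ℕ∞))
    (modelWithCornersSelf ℝ E) hK.isClosed hKL
  exact ⟨φ, φ.contMDiff.contDiff, .intro hL hφL,
    (closure_minimal (Function.support_subset_iff'.2 hφL) hL.isClosed).trans hLU, hφ,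
    fun x hx => hφK.self_of_nhdsSet x hx⟩

theorem statement4_general [MeasurableSpace E] [BorelSpace E] {μ : Measure E}
    [IsFiniteMeasureOnCompacts μ] {Ω : Set E} (hΩ : IsOpen Ω) {f : ℕ → E → ℝ}
    (hf : ∀ j, LocallyIntegrableOn (f j) Ω μ)
    (hweak : ∀ φ : E → ℝ, ContDiff ℝ (⊤ : ℕ∞) φ → HasCompactSupport φ → tsupport φ ⊆ Ω →
      Tendsto (fun j => ∫ x in Ω, f j x * φ x ∂μ) atTop (𝓝 0))
    (hmeas : ∀ K ⊆ Ω, IsCompact K →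
      TendstoInMeasure (μ.restrict K) (fun j x => (f j x)⁻) atTop 0)
    (hui : ∀ K ⊆ Ω, IsCompact K → UnifIntegrable (fun j x => (f j x)⁻) 1 (μ.restrict K)) :
    ∀ K ⊆ Ω, IsCompact K → Tendsto (fun j => ∫ x in K, |f j x| ∂μ) atTop (𝓝 0) := by
  intro K hKΩ hK
  obtain ⟨φ, hφ_smooth, hφ_compact, hφΩ, hφ01, hφK⟩ :=
    exists_contDiff_hasCompactSupport_eqOn_one hK hΩ hKΩ
  have hKφ : K ⊆ tsupport φ := fun x hx =>
    subset_tsupport φ (by simp [Function.mem_support, hφK hx])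
  have hint : ∀ j, IntegrableOn (f j) (tsupport φ) μ := fun j =>
    (hf j).integrableOn_compact_subset hφΩ hφ_compact
  have : IsFiniteMeasure (μ.restrict (tsupport φ)) :=
    isFiniteMeasure_restrict.2 hφ_compact.measure_lt_top.ne
  have hneg : Tendsto (fun j => ∫ x in tsupport φ, (f j x)⁻ ∂μ) atTop (𝓝 0) := by
    simpa using tendsto_integral_of_unifIntegrable_of_tendstoInMeasure
      (f := fun j x => (f j x)⁻) (fun j => (hint j).neg_part) (integrable_zero _ _ _)
      (hui _ hφΩ hφ_compact) (hmeas _ hφΩ hφ_compact)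
  have hbound : ∀ j, ∫ x in K, |f j x| ∂μ ≤
      ∫ x in Ω, f j x * φ x ∂μ + 2 * ∫ x in tsupport φ, (f j x)⁻ ∂μ := fun j => by
    have h := setIntegral_abs_le_integral_mul_add_integral_negPart hK.measurableSet (hint j)
      hφ_smooth.continuous.aestronglyMeasurable hφ01 hφK
    rwa [Measure.restrict_restrict_of_subset hKφ,
      ← setIntegral_eq_of_subset_of_forall_sdiff_eq_zero hΩ.measurableSet hφΩ fun x hx => by
        rw [image_eq_zero_of_notMem_tsupport hx.2, mul_zero]] at h
  refine squeeze_zero (fun j => integral_nonneg fun x => abs_nonneg _) hbound ?_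
  simpa using (hweak φ hφ_smooth hφ_compact hφΩ).add (hneg.const_mul 2)

end FiniteDimensional

theorem statement4 {d : ℕ}
    (f : ℕ → EuclideanSpace ℝ (Fin d) → ℝ)
    (hint : ∀ j, IntegrableOn (f j) (ball (0 : EuclideanSpace ℝ (Fin d)) 1) volume)
    (h1 : ∀ φ : EuclideanSpace ℝ (Fin d) → ℝ, ContDiff ℝ (⊤ : ℕ∞) φ → HasCompactSupport φ →
      tsupport φ ⊆ ball (0 : EuclideanSpace ℝ (Fin d)) 1 →
      Tendsto (fun j => ∫ x in ball (0 : EuclideanSpace ℝ (Fin d)) 1, f j x * φ x) atTop (𝓝 0))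
    (h2 : ∀ δ : ℝ, 0 < δ →
      Tendsto (fun j =>
          volume {x ∈ ball (0 : EuclideanSpace ℝ (Fin d)) 1 | δ < max (-(f j x)) 0})
        atTop (𝓝 0))
    (h3 : ∀ ε : ℝ, 0 < ε → ∃ δ : ℝ, 0 < δ ∧
      ∀ j, ∀ A : Set (EuclideanSpace ℝ (Fin d)), A ⊆ ball 0 1 → MeasurableSet A →
        volume A < ENNReal.ofReal δ → ∫ x in A, max (-(f j x)) 0 ≤ ε) :
    ∀ K : Set (EuclideanSpace ℝ (Fin d)), K ⊆ ball 0 1 → IsCompact K →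
      Tendsto (fun j => ∫ x in K, |f j x|) atTop (𝓝 0) := by
  have hnorm : ∀ j x, ‖(f j x)⁻‖ = max (-(f j x)) 0 := fun j x =>
    Real.norm_of_nonneg (negPart_nonneg _)
  refine statement4_general isOpen_ball (fun j => (hint j).locallyIntegrableOn) h1
    (fun K hKB hK => tendstoInMeasure_restrict_of_tendsto_measure_lt_norm hK.measurableSet hKB
      (by simpa only [hnorm] using h2))
    fun K hKB hK => unifIntegrable_one_restrict_of_setIntegral_norm_le hK.measurableSet
      (fun j => ((hint j).mono_set hKB).neg_part) fun ε hε => ?_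
  obtain ⟨δ, hδ, hA⟩ := h3 ε hε
  exact ⟨δ, hδ, fun j A hAK => by simpa only [hnorm] using hA j A (hAK.trans hKB)⟩
end
end

section
/- Let d ≥ 1, let ξ ∈ ℝ^d ∖ {0}, and let M ∈ ℝ^{d×d} be symmetric. Then ξ_k (Mξ)_j + ξ_j (Mξ)_k − ξ_j ξ_k tr(M) − |ξ|² M_{jk} = 0 for all j,k ∈ {1,…,d} if and only if M = a ⊙ ξ := (a ⊗ ξ + ξ ⊗ a)/2 for some a ∈ ℝ^d. (The computation ker(curl curl)(ξ) = {a ⊙ ξ : a ∈ ℝ^d} from Section 3.2.) -/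
/-! Write `s = ξ ⬝ᵥ ξ` and `p(M) = 2 Mξ - tr(M) ξ`. The symbol at `ξ` maps `M` to `p(M) ⊙ ξ - s M`,
and `p(a ⊙ ξ) = s a`. Hence the symbol vanishes on every `a ⊙ ξ`, and if it vanishes at `M` then
`M = a ⊙ ξ` with `a = s⁻¹ p(M)`. -/

section CurlCurl

open Matrix

variable {n R : Type*} [CommRing R]

section SymmTensor

variable [Invertible (2 : R)]

/-- The symmetrized tensor product `a ⊙ b = (a ⊗ b + b ⊗ a) / 2` of two vectors, as a matrix. -/
def symmTensor (a b : n → R) : Matrix n n R :=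
  (⅟2 : R) • (vecMulVec a b + vecMulVec b a)

lemma symmTensor_apply (a b : n → R) (j k : n) :
    symmTensor a b j k = ⅟2 * (a j * b k + b j * a k) :=
  rfl

lemma symmTensor_smul_left (c : R) (a b : n → R) :
    symmTensor (c • a) b = c • symmTensor a b := by
  simp only [symmTensor, smul_vecMulVec, vecMulVec_smul, ← smul_add, smul_comm c]

variable [Fintype n]

lemma trace_symmTensor (a b : n → R) : (symmTensor a b).trace = a ⬝ᵥ b := by
  rw [symmTensor, trace_smul, trace_add, trace_vecMulVec, trace_vecMulVec, dotProduct_comm b a,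
    ← two_mul, smul_eq_mul, invOf_mul_cancel_left]

lemma two_smul_symmTensor_mulVec (a b c : n → R) :
    (2 : R) • (symmTensor a b *ᵥ c) = (b ⬝ᵥ c) • a + (a ⬝ᵥ c) • b := by
  simp only [symmTensor, smul_mulVec, smul_invOf_smul, add_mulVec, vecMulVec_mulVec,
    op_smul_eq_smul]

end SymmTensor

variable [Fintype n]

/-- The symbol at `ξ` of the second-order operator `curl curl` (each `∂ᵢ` replaced by `ξ i`), given
by the formula for symmetric matrices on all square ones. -/
def curlCurlSymbol (ξ : n → R) (M : Matrix n n R) : Matrix n n R :=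
  vecMulVec (M *ᵥ ξ) ξ + vecMulVec ξ (M *ᵥ ξ) - M.trace • vecMulVec ξ ξ - (ξ ⬝ᵥ ξ) • M

lemma curlCurlSymbol_apply (ξ : n → R) (M : Matrix n n R) (j k : n) :
    curlCurlSymbol ξ M j k =
      ξ k * (M *ᵥ ξ) j + ξ j * (M *ᵥ ξ) k - ξ j * ξ k * M.trace - (ξ ⬝ᵥ ξ) * M j k := by
  simp only [curlCurlSymbol, Matrix.sub_apply, Matrix.add_apply, Matrix.smul_apply,
    vecMulVec_apply, smul_eq_mul]
  ring

/-- The vector `2 Mξ - tr(M) ξ`, which recovers `(ξ ⬝ᵥ ξ) a` from `M = a ⊙ ξ`. -/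
def scaledPotential (ξ : n → R) (M : Matrix n n R) : n → R :=
  (2 : R) • (M *ᵥ ξ) - M.trace • ξ

variable [Invertible (2 : R)]

lemma scaledPotential_symmTensor (a ξ : n → R) :
    scaledPotential ξ (symmTensor a ξ) = (ξ ⬝ᵥ ξ) • a := by
  rw [scaledPotential, two_smul_symmTensor_mulVec, trace_symmTensor, add_sub_cancel_right]

lemma curlCurlSymbol_eq_symmTensor_sub (ξ : n → R) (M : Matrix n n R) :
    curlCurlSymbol ξ M = symmTensor (scaledPotential ξ M) ξ - (ξ ⬝ᵥ ξ) • M := by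
  ext j k
  simp only [curlCurlSymbol_apply, Matrix.sub_apply, Matrix.smul_apply, symmTensor_apply,
    scaledPotential, Pi.sub_apply, Pi.smul_apply, smul_eq_mul]
  linear_combination
    -(ξ k * (M *ᵥ ξ) j + ξ j * (M *ᵥ ξ) k - ξ j * ξ k * M.trace) * invOf_mul_self (2 : R)

lemma curlCurlSymbol_symmTensor (a ξ : n → R) : curlCurlSymbol ξ (symmTensor a ξ) = 0 := by
  rw [curlCurlSymbol_eq_symmTensor_sub, scaledPotential_symmTensor, symmTensor_smul_left, sub_self]

theorem statement11_general {ξ : n → R} (hξ : IsUnit (ξ ⬝ᵥ ξ)) (M : Matrix n n R) :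
    curlCurlSymbol ξ M = 0 ↔ ∃ a : n → R, M = symmTensor a ξ := by
  constructor
  · intro h
    obtain ⟨s, hs⟩ := hξ
    rw [curlCurlSymbol_eq_symmTensor_sub, sub_eq_zero, ← hs] at h
    refine ⟨(↑s⁻¹ : R) • scaledPotential ξ M, ?_⟩
    rw [symmTensor_smul_left, h, smul_smul, s.inv_mul, one_smul]
  · rintro ⟨a, rfl⟩
    exact curlCurlSymbol_symmTensor a ξ

end CurlCurl

theorem statement11 {d : ℕ} (hd : 1 ≤ d) (ξ : Fin d → ℝ) (hξ : ξ ≠ 0)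
    (M : Matrix (Fin d) (Fin d) ℝ) (hM : M.IsSymm) :
    (∀ j k, ξ k * M.mulVec ξ j + ξ j * M.mulVec ξ k - ξ j * ξ k * M.trace
        - (∑ i, ξ i ^ 2) * M j k = 0) ↔
      ∃ a : Fin d → ℝ, M = Matrix.of fun j k => (a j * ξ k + ξ j * a k) / 2 := by
  have hs : IsUnit (ξ ⬝ᵥ ξ) := isUnit_iff_ne_zero.2 (mt dotProduct_self_eq_zero.1 hξ)
  simpa only [← Matrix.ext_iff, curlCurlSymbol_apply, symmTensor_apply, Matrix.zero_apply,
    Matrix.of_apply, dotProduct, ← sq, invOf_eq_inv, div_eq_inv_mul]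
    using statement11_general hs M
end

section
/- Let d ≥ 2. If M ∈ ℝ^{d×d} has the property that every (d−1)-dimensional linear subspace π of ℝ^d contains some ξ ≠ 0 for which M = a ⊙ ξ := (a ⊗ ξ + ξ ⊗ a)/2 for some a ∈ ℝ^d, then M = 0. (The computation Λ^{d−1}_{curl curl} = {0} underlying the BD dimensional estimate in Section 3.2.) -/
/-!
If `M = a ⊙ ξ`, the quadratic form of `M` is `v ↦ (v ⬝ᵥ a) * (v ⬝ᵥ ξ)`, which vanishes at every `v`
orthogonal to `ξ`. The hyperplanes are the orthogonal complements of the vectors `v ≠ 0`, so a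
matrix which has, for each hyperplane, a representation with `ξ` in that hyperplane has zero
quadratic form. Being symmetric, it is zero by polarization.
-/

open Module
open scoped Matrix

variable {n K : Type*} [Field K]

/-- The symmetrized tensor product `a ⊙ b = (a ⊗ b + b ⊗ a) / 2` of two vectors, as a matrix.
In characteristic two the division makes it the junk value `0`. -/
def symmVecMulVec (a b : n → K) : Matrix n n K :=
  Matrix.of fun i j => (a i * b j + b i * a j) / 2

theorem symmVecMulVec_eq_smul_vecMulVec (a b : n → K) :
    symmVecMulVec a b = (2 : K)⁻¹ • (Matrix.vecMulVec a b + Matrix.vecMulVec b a) := by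
  ext i j
  exact div_eq_inv_mul _ _

theorem isSymm_symmVecMulVec (a b : n → K) : (symmVecMulVec a b).IsSymm := by
  simp only [Matrix.IsSymm, symmVecMulVec_eq_smul_vecMulVec, Matrix.transpose_smul,
    Matrix.transpose_add, Matrix.transpose_vecMulVec, add_comm]

theorem dotProduct_symmVecMulVec_mulVec_self [Fintype n] [NeZero (2 : K)] (a b v : n → K) :
    v ⬝ᵥ symmVecMulVec a b *ᵥ v = (v ⬝ᵥ a) * (v ⬝ᵥ b) := by
  simp only [symmVecMulVec_eq_smul_vecMulVec, Matrix.smul_mulVec, Matrix.add_mulVec,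
    Matrix.vecMulVec_mulVec, dotProduct_smul, dotProduct_add, dotProduct_comm _ v, smul_eq_mul,
    MulOpposite.smul_eq_mul_unop, MulOpposite.unop_op]
  field_simp
  ring

theorem eq_of_isSymm_of_forall_dotProduct_mulVec_self_eq [Fintype n] [NeZero (2 : K)]
    {A B : Matrix n n K} (hA : A.IsSymm) (hB : B.IsSymm)
    (h : ∀ v, v ⬝ᵥ A *ᵥ v = v ⬝ᵥ B *ᵥ v) : A = B := by
  classical
  refine Matrix.toBilin'.injective (LinearMap.BilinForm.ext_of_isSymm
    (Matrix.isSymm_toBilin'_iff_isSymm.2 hA) (Matrix.isSymm_toBilin'_iff_isSymm.2 hB) fun v => ?_)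
  simpa only [Matrix.toBilin'_apply'] using h v

theorem finrank_ker_dotProductBilin_add_one [Fintype n] {v : n → K} (hv : v ≠ 0) :
    finrank K (LinearMap.ker (dotProductBilin K K v)) + 1 = Fintype.card n := by
  classical
  rw [← finrank_fintype_fun_eq_card K]
  exact Dual.finrank_ker_add_one_of_ne_zero ((dotProductEquiv K n).map_ne_zero_iff.2 hv)

theorem statement12_general [Fintype n] [NeZero (2 : K)] (M : Matrix n n K)
    (h : ∀ π : Submodule K (n → K), finrank K π + 1 = Fintype.card n →
      ∃ ξ ∈ π, ∃ a : n → K, M = symmVecMulVec a ξ) :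
    M = 0 := by
  have exists_orthogonal (v : n → K) (hv : v ≠ 0) :
      ∃ ξ : n → K, v ⬝ᵥ ξ = 0 ∧ ∃ a, M = symmVecMulVec a ξ :=
    h _ (finrank_ker_dotProductBilin_add_one hv)
  rcases isEmpty_or_nonempty n with _ | _
  · exact Subsingleton.elim M 0
  have hM : M.IsSymm := by
    obtain ⟨v, hv⟩ := exists_ne (0 : n → K)
    obtain ⟨ξ, -, a, rfl⟩ := exists_orthogonal v hv
    exact isSymm_symmVecMulVec a ξ
  have quadratic_eq_zero (v : n → K) : v ⬝ᵥ M *ᵥ v = 0 := by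
    rcases eq_or_ne v 0 with rfl | hv
    · exact zero_dotProduct _
    obtain ⟨ξ, hξ, a, rfl⟩ := exists_orthogonal v hv
    rw [dotProduct_symmVecMulVec_mulVec_self, hξ, mul_zero]
  refine eq_of_isSymm_of_forall_dotProduct_mulVec_self_eq hM Matrix.isSymm_zero fun v => ?_
  rw [quadratic_eq_zero, Matrix.zero_mulVec, dotProduct_zero]

theorem statement12 {d : ℕ} (hd : 2 ≤ d) (M : Matrix (Fin d) (Fin d) ℝ)
    (h : ∀ π : Submodule ℝ (Fin d → ℝ), Module.finrank ℝ π = d - 1 →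
      ∃ ξ ∈ π, ξ ≠ 0 ∧ ∃ a : Fin d → ℝ,
        M = Matrix.of fun j k => (a j * ξ k + ξ j * a k) / 2) :
    M = 0 := by
  refine statement12_general M fun π hπ => ?_
  obtain ⟨ξ, hξ, -, hM⟩ := h π (Nat.eq_sub_of_add_eq (hπ.trans (Fintype.card_fin d)))
  exact ⟨ξ, hξ, hM⟩
end
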